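/- For every α ∈ [0,∞], set δ = (1 − e^{−α})/2 ∈ [0, 1/2]. Then for every n ≥ 0: (i) 1 − δ ≤ h_n(α) ≤ 1, and (ii) e^{−δ} − δ^{n/2}/⌊n/2⌋! ≤ h_n(α) ≤ e^{−δ} + δ^{n/2}/⌊n/2⌋!. -/

import Mathlib

/-!
The proof rests on the exact formula `h_n(α) = ∑_{j ≤ n/2} (-δ)^j / j!`: the coefficient `h_n(α)` is
a Taylor polynomial of `exp (-δ)`. Both bounds are then estimates for an alternating sum with
decreasing terms and for the Taylor remainder of the exponential.

For the formula, let `P_n(X) = ∑_{π ∈ S_n} X^{N₂(π)}`. Differentiating marks a 2-cycle of `π`, and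
deleting the marked 2-cycle leaves an arbitrary permutation of the other `n - 2` points, so
`2 P_n' = n (n - 1) P_{n-2}` (`two_mul_derivative_cyclePoly`). Together with `P_n(1) = n!` this
determines `P_n` by induction (`cyclePoly_eq`). The induction is run over arbitrary finite types,
since the complement of a 2-cycle in `Fin n` is not literally some `Fin m`.
-/

open Finset

noncomputable section

/-- The number of cycles of length exactly 2 of a permutation of `{1,…,n}`. -/
def twoCycles {n : ℕ} (π : Equiv.Perm (Fin n)) : ℕ :=
  (Finset.univ.filter fun i : Fin n => Function.minimalPeriod (⇑π) i = 2).card / 2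

/-- `e^{-α}` for `α ∈ [0,∞]`, with `e^{-∞} = 0`. -/
def expNegE (α : ENNReal) : ℝ := if α = ⊤ then 0 else Real.exp (-α.toReal)

/-- `h_n(α) = (1/n!) ∑_{π ∈ S_n} e^{-α N₂(π)}`. -/
def hcoef (α : ENNReal) (n : ℕ) : ℝ :=
  (1 / (n.factorial : ℝ)) * ∑ π : Equiv.Perm (Fin n), expNegE α ^ twoCycles π

/-! ### Deleting a 2-cycle -/

section Combinatorics

open Polynomial Equiv

variable {ι : Type} [Fintype ι] [DecidableEq ι]

/-- The set of points lying on a 2-cycle of `π`. -/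
def twoPts (π : Perm ι) : Finset ι := univ.filter fun i => π i ≠ i ∧ π (π i) = i

theorem minimalPeriod_eq_two_iff {κ : Type} (π : Perm κ) (i : κ) :
    Function.minimalPeriod (⇑π) i = 2 ↔ π i ≠ i ∧ π (π i) = i := by
  rw [Function.minimalPeriod_eq_prime_iff]
  simp [Function.IsPeriodicPt, Function.IsFixedPt, and_comm]

theorem mem_twoPts {π : Perm ι} {i : ι} : i ∈ twoPts π ↔ π i ≠ i ∧ π (π i) = i := by
  simp [twoPts]

theorem even_card_twoPts (π : Perm ι) : Even (#(twoPts π)) := by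
  -- `π` restricts to a fixed-point-free involution of `twoPts π`.
  have h : ∑ _i ∈ twoPts π, (1 : ZMod 2) = 0 := by
    refine Finset.sum_involution (fun i _ => π i) ?_ ?_ ?_ ?_
    · intros; decide
    · intro i hi _
      exact (mem_filter.1 hi).2.1
    · intro i hi
      have := (mem_filter.1 hi).2
      simp [twoPts, this.2, this.1.symm]
    · intro i hi
      exact (mem_filter.1 hi).2.2
  rw [← ZMod.natCast_eq_zero_iff_even]
  simpa using h

/-- Adding the 2-cycle `(i j)` to a permutation of the other points adds two points to `twoPts`. -/
theorem card_twoPts_swap_mul {i j : ι} (hij : i ≠ j) (σ : Perm {k // k ≠ i ∧ k ≠ j}) :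
    #(twoPts (swap i j * Perm.ofSubtype σ)) = #(twoPts σ) + 2 := by
  have hset : twoPts (swap i j * Perm.ofSubtype σ) =
      (twoPts σ).map (Function.Embedding.subtype _) ∪ {i, j} := by
    have hi : Perm.ofSubtype σ i = i := Perm.ofSubtype_apply_of_not_mem σ (by simp)
    have hj : Perm.ofSubtype σ j = j := Perm.ofSubtype_apply_of_not_mem σ (by simp)
    ext k
    by_cases hk : k ≠ i ∧ k ≠ j
    · have h1 : (swap i j * Perm.ofSubtype σ) k = (σ ⟨k, hk⟩ : ι) := by
        rw [Perm.mul_apply, Perm.ofSubtype_apply_of_mem σ hk]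
        exact swap_apply_of_ne_of_ne (σ ⟨k, hk⟩).2.1 (σ ⟨k, hk⟩).2.2
      have h2 : (swap i j * Perm.ofSubtype σ) (σ ⟨k, hk⟩ : ι) = (σ (σ ⟨k, hk⟩) : ι) := by
        rw [Perm.mul_apply, Perm.ofSubtype_apply_coe]
        exact swap_apply_of_ne_of_ne (σ (σ ⟨k, hk⟩)).2.1 (σ (σ ⟨k, hk⟩)).2.2
      simp only [twoPts, mem_filter, mem_univ, true_and, h1, h2]
      simp [hk.1, hk.2, Subtype.ext_iff]
    · have hk' : k = i ∨ k = j := by tauto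
      rw [mem_union, mem_twoPts, Perm.mul_apply, Perm.mul_apply]
      rcases hk' with rfl | rfl
      · simp [hi, hj, hij.symm]
      · simp [hi, hj, hij]
  rw [hset, card_union_of_disjoint, card_map, card_pair hij]
  rw [disjoint_left]
  intro k hk
  obtain ⟨l, _, rfl⟩ := mem_map.1 hk
  simpa using l.2

/-- The permutations having `(i j)` as a 2-cycle are parametrised by the permutations of the
remaining points. -/
theorem sum_perm_with_swap {M : Type*} [AddCommMonoid M] {i j : ι} (hij : i ≠ j) (f : ℕ → M) :
    ∑ π : Perm ι with π i = j ∧ π j = i, f (#(twoPts π)) =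
      ∑ σ : Perm {k // k ≠ i ∧ k ≠ j}, f (#(twoPts σ) + 2) := by
  symm
  refine Finset.sum_bij (fun σ _ => swap i j * Perm.ofSubtype σ) ?_ ?_ ?_ ?_
  · intro σ _
    have hi : Perm.ofSubtype σ i = i := Perm.ofSubtype_apply_of_not_mem σ (by simp)
    have hj : Perm.ofSubtype σ j = j := Perm.ofSubtype_apply_of_not_mem σ (by simp)
    simp [hi, hj]
  · intro σ _ τ _ h
    exact Perm.ofSubtype_injective (mul_left_cancel h)
  · intro π hπ
    have hπ' := (mem_filter.1 hπ).2
    obtain ⟨σ, hσ⟩ := (Perm.subtypeEquivSubtypePerm fun k => k ≠ i ∧ k ≠ j).surjective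
      ⟨swap i j * π, fun k hk => by
        have hk' : k = i ∨ k = j := by tauto
        rcases hk' with rfl | rfl
        · simp [hπ'.1]
        · simp [hπ'.2]⟩
    refine ⟨σ, mem_univ _, ?_⟩
    have h : Perm.ofSubtype σ = swap i j * π := congrArg Subtype.val hσ
    rw [h, swap_mul_self_mul]
  · intro σ _
    rw [card_twoPts_swap_mul hij]

variable (ι) in
/-- The generating polynomial `∑_π X ^ N₂(π)` of the number of 2-cycles. -/
def cyclePoly : ℝ[X] := ∑ π : Perm ι, X ^ (#(twoPts π) / 2)

theorem two_mul_derivative_cyclePoly :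
    2 * derivative (cyclePoly ι) =
      ∑ p : ι × ι with p.1 ≠ p.2, cyclePoly {k // k ≠ p.1 ∧ k ≠ p.2} := by
  have h1 : ∀ π : Perm ι, 2 * derivative (X ^ (#(twoPts π) / 2) : ℝ[X]) =
      ∑ p : ι × ι with p.1 ≠ p.2,
        if π p.1 = p.2 ∧ π p.2 = p.1 then (X ^ (#(twoPts π) / 2 - 1) : ℝ[X]) else 0 := by
    intro π
    have hc : #(twoPts π) =
        #{p ∈ univ.filter (fun p : ι × ι => p.1 ≠ p.2) | π p.1 = p.2 ∧ π p.2 = p.1} := by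
      refine Finset.card_bij (fun i _ => (i, π i)) ?_ ?_ ?_
      · intro i hi
        have := (mem_filter.1 hi).2
        simp [this.2, this.1.symm]
      · intro a _ b _ h
        exact congrArg Prod.fst h
      · rintro ⟨a, b⟩ h
        simp only [mem_filter, mem_univ, true_and] at h
        obtain ⟨h1, rfl, h3⟩ := h
        exact ⟨a, by simp [twoPts, h3, Ne.symm h1], rfl⟩
    rw [← sum_filter, sum_const, ← hc, derivative_X_pow]
    obtain ⟨m, hm⟩ := even_card_twoPts π
    have hm' : #(twoPts π) / 2 = m := by omega
    rw [hm', hm, nsmul_eq_mul]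
    simp only [map_natCast, Nat.cast_add]
    ring
  rw [cyclePoly, derivative_sum, mul_sum, sum_congr rfl fun π _ => h1 π, sum_comm]
  refine sum_congr rfl fun p hp => ?_
  rw [← sum_filter, sum_perm_with_swap (mem_filter.1 hp).2 fun m => (X ^ (m / 2 - 1) : ℝ[X])]
  refine sum_congr rfl fun σ _ => ?_
  congr 1
  omega

/-- The Taylor polynomial of degree `m` of `exp ((X - 1) / 2)` around `X = 1`. -/
def taylorPoly (m : ℕ) : ℝ[X] :=
  ∑ j ∈ range (m + 1), C (1 / (j.factorial : ℝ)) * (C (1 / 2) * (X - 1)) ^ j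

theorem derivative_taylorPoly_succ (m : ℕ) :
    2 * derivative (taylorPoly (m + 1)) = taylorPoly m := by
  rw [taylorPoly, taylorPoly, sum_range_succ', derivative_add, derivative_sum]
  simp only [pow_zero, mul_one, derivative_C, add_zero]
  rw [mul_sum]
  refine sum_congr rfl fun j _ => ?_
  have h2 : (2 : ℝ[X]) = C 2 := (map_ofNat C 2).symm
  have hd : derivative (C (1 / 2 : ℝ) * (X - 1)) = C (1 / 2 : ℝ) := by
    rw [derivative_C_mul, derivative_sub, derivative_X, derivative_one]; simp
  rw [derivative_C_mul, derivative_pow_succ, hd, h2]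
  have h3 : C (1 / (j.factorial : ℝ)) =
      C 2 * (C (1 / ((j + 1).factorial : ℝ)) * (C ((j : ℝ) + 1) * C (1 / 2 : ℝ))) := by
    simp only [← C_mul]
    congr 1
    rw [Nat.factorial_succ]
    push_cast
    field_simp
  rw [h3]
  ring

theorem eval_one_taylorPoly (m : ℕ) : (taylorPoly m).eval 1 = 1 := by
  rw [taylorPoly, sum_range_succ', eval_add, eval_finsetSum]
  simp

end Combinatorics

open Polynomial in
/-- `P_n = n! ∑_{j ≤ n/2} ((X - 1) / 2)^j / j!` for the permutations of any set of size `n`. -/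
theorem cyclePoly_eq (n : ℕ) : ∀ (ι : Type) [Fintype ι] [DecidableEq ι], Fintype.card ι = n →
    cyclePoly ι = C (n.factorial : ℝ) * taylorPoly (n / 2) := by
  induction n using Nat.strong_induction_on with
  | _ n ih =>
  intro ι _ _ hn
  have hsum : ∀ p ∈ univ.filter (fun p : ι × ι => p.1 ≠ p.2),
      cyclePoly {k // k ≠ p.1 ∧ k ≠ p.2} =
        C ((n - 2).factorial : ℝ) * taylorPoly ((n - 2) / 2) := by
    intro p hp
    have hp' : p.1 ≠ p.2 := (mem_filter.1 hp).2
    have hcard : Fintype.card {k // k ≠ p.1 ∧ k ≠ p.2} = n - 2 := by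
      rw [Fintype.card_subtype, ← hn]
      have : (univ.filter fun k => k ≠ p.1 ∧ k ≠ p.2) = univ \ {p.1, p.2} := by
        ext k; simp
      rw [this, card_sdiff_of_subset (subset_univ _), card_pair hp', card_univ]
    have : 0 < n := hn ▸ Fintype.card_pos_iff.2 ⟨p.1⟩
    exact ih _ (by omega) _ hcard
  have hoff : #(univ.filter fun p : ι × ι => p.1 ≠ p.2) = n * (n - 1) := by
    have : (univ.filter fun p : ι × ι => p.1 ≠ p.2) = (univ : Finset ι).offDiag := by
      ext p; simp
    rw [this, offDiag_card, card_univ, hn, Nat.mul_sub_one]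
  have hder := two_mul_derivative_cyclePoly (ι := ι)
  rw [sum_congr rfl hsum, sum_const, hoff, nsmul_eq_mul] at hder
  have hder' : 2 * derivative (C (n.factorial : ℝ) * taylorPoly (n / 2)) =
      2 * derivative (cyclePoly ι) := by
    rw [hder, derivative_C_mul]
    rcases n with _ | _ | n
    · simp [taylorPoly]
    · simp [taylorPoly]
    · have h1 : (n + 1 + 1) / 2 = n / 2 + 1 := by omega
      rw [h1, mul_left_comm, derivative_taylorPoly_succ]
      simp only [Nat.add_sub_cancel, Nat.factorial_succ, map_natCast]
      push_cast
      ring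
  have hzero : derivative (C (n.factorial : ℝ) * taylorPoly (n / 2) - cyclePoly ι) = 0 := by
    rw [derivative_sub, sub_eq_zero]
    exact mul_left_cancel₀ two_ne_zero hder'
  have hconst := eq_C_of_derivative_eq_zero hzero
  have heval := congrArg (eval 1) hconst
  generalize (C (n.factorial : ℝ) * taylorPoly (n / 2) - cyclePoly ι).coeff 0 = c at hconst heval
  rw [eval_C, eval_sub, eval_mul, eval_C, eval_one_taylorPoly, cyclePoly, eval_finsetSum] at heval
  simp only [eval_pow, eval_X, one_pow, sum_const, card_univ, Fintype.card_perm, hn,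
    nsmul_eq_mul, mul_one, sub_self] at heval
  rw [← heval, C_0] at hconst
  exact (sub_eq_zero.1 hconst).symm

theorem hcoef_eq (α : ENNReal) (n : ℕ) :
    hcoef α n =
      ∑ j ∈ range (n / 2 + 1), (-((1 - expNegE α) / 2)) ^ j / (j.factorial : ℝ) := by
  have h := congrArg (Polynomial.eval (expNegE α)) (cyclePoly_eq n (Fin n) (Fintype.card_fin n))
  have hpow : ∀ π : Equiv.Perm (Fin n), twoCycles π = #(twoPts π) / 2 := by
    intro π
    simp only [twoCycles, twoPts, minimalPeriod_eq_two_iff]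
  rw [cyclePoly, Polynomial.eval_finsetSum, taylorPoly, Polynomial.eval_mul,
    Polynomial.eval_finsetSum] at h
  simp only [Polynomial.eval_pow, Polynomial.eval_X, Polynomial.eval_C, Polynomial.eval_mul,
    Polynomial.eval_sub, Polynomial.eval_one] at h
  have hf : (n.factorial : ℝ) ≠ 0 := by positivity
  simp only [hcoef, hpow]
  rw [h, ← mul_assoc, one_div_mul_cancel hf, one_mul]
  refine sum_congr rfl fun j _ => ?_
  rw [show 1 / 2 * (expNegE α - 1) = -((1 - expNegE α) / 2) by ring]
  ring

/-! ### Estimates for the Taylor polynomials of `exp` -/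

theorem alternating_sum_bounds (m : ℕ) : ∀ t : ℕ → ℝ, (∀ j, 0 ≤ t j) → Antitone t →
    0 ≤ ∑ j ∈ range m, (-1) ^ j * t j ∧ ∑ j ∈ range m, (-1) ^ j * t j ≤ t 0 := by
  induction m with
  | zero => intro t h0 _; simpa using h0 0
  | succ m ih =>
    intro t h0 ht
    obtain ⟨h1, h2⟩ := ih (fun j => t (j + 1)) (fun j => h0 _) fun a b h => ht (by omega)
    have h3 : t (0 + 1) ≤ t 0 := ht (by omega)
    have h4 : ∑ j ∈ range (m + 1), (-1) ^ j * t j =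
        t 0 - ∑ j ∈ range m, (-1) ^ j * t (j + 1) := by
      rw [sum_range_succ', sub_eq_add_neg, ← sum_neg_distrib, add_comm]
      congr 1
      · simp
      · exact sum_congr rfl fun j _ => by ring
    constructor <;> linarith

theorem taylor_sum_bounds {δ : ℝ} (h0 : 0 ≤ δ) (h1 : δ ≤ 1) (m : ℕ) :
    1 - δ ≤ ∑ j ∈ range (m + 1), (-δ) ^ j / (j.factorial : ℝ) ∧
      ∑ j ∈ range (m + 1), (-δ) ^ j / (j.factorial : ℝ) ≤ 1 := by
  obtain ⟨h2, h3⟩ := alternating_sum_bounds m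
    (fun j => δ ^ (j + 1) / ((j + 1).factorial : ℝ)) (fun j => by positivity) (by
      refine antitone_nat_of_succ_le fun j => ?_
      have hf : ((j + 1).factorial : ℝ) ≤ ((j + 1 + 1).factorial : ℝ) := by
        exact_mod_cast Nat.factorial_le (by omega)
      have hp : δ ^ (j + 1 + 1) ≤ δ ^ (j + 1) := pow_le_pow_of_le_one h0 h1 (by omega)
      gcongr)
  have h4 : ∑ j ∈ range (m + 1), (-δ) ^ j / (j.factorial : ℝ) =
      1 - ∑ j ∈ range m, (-1) ^ j * (δ ^ (j + 1) / ((j + 1).factorial : ℝ)) := by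
    rw [sum_range_succ', sub_eq_add_neg, ← sum_neg_distrib, add_comm]
    congr 1
    · simp
    · refine sum_congr rfl fun j _ => ?_
      rw [neg_pow δ]
      ring
  simp only [zero_add, pow_one, Nat.factorial_one, Nat.cast_one, div_one] at h3
  constructor <;> linarith

theorem taylor_remainder {δ : ℝ} (h0 : 0 ≤ δ) (h1 : δ ≤ 1) (m : ℕ) :
    |Real.exp (-δ) - ∑ j ∈ range (m + 1), (-δ) ^ j / (j.factorial : ℝ)| ≤
      δ ^ (m + 1) / (m.factorial : ℝ) := by
  rcases m with _ | m
  · -- `Real.exp_bound` is too weak by a factor of 2 in this case.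
    have h2 := Real.add_one_le_exp (-δ)
    have h3 : Real.exp (-δ) ≤ 1 := Real.exp_le_one_iff.2 (by linarith)
    rw [abs_le]
    constructor <;> simp <;> linarith
  · have habs : |(-δ)| = δ := by rw [abs_neg, abs_of_nonneg h0]
    have h := Real.exp_bound (x := -δ) (by rwa [habs]) (n := m + 1 + 1) (by omega)
    rw [habs] at h
    refine h.trans ?_
    rw [div_eq_mul_inv (δ ^ _)]
    refine mul_le_mul_of_nonneg_left ?_ (by positivity)
    rw [Nat.factorial_succ (m + 1), ← one_div, div_le_div_iff₀ (by positivity) (by positivity)]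
    have hf : (0 : ℝ) ≤ ((m + 1).factorial : ℝ) := by positivity
    have hm : (0 : ℝ) ≤ (m : ℝ) := by positivity
    push_cast
    -- After cancelling `(m+1)!` this is `m + 3 ≤ (m + 2)²`.
    nlinarith [mul_nonneg hf hm, mul_nonneg (mul_nonneg hf hm) hm]

theorem expNegE_mem (α : ENNReal) : 0 ≤ expNegE α ∧ expNegE α ≤ 1 := by
  unfold expNegE
  split_ifs
  · simp
  · exact ⟨(Real.exp_pos _).le, Real.exp_le_one_iff.2 (by simp)⟩

/-- With `δ = (1 - e^{-α})/2 ∈ [0,1/2]`: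
(i) `1 - δ ≤ h_n(α) ≤ 1`; and
(ii) `e^{-δ} - δ^{n/2}/⌊n/2⌋! ≤ h_n(α) ≤ e^{-δ} + δ^{n/2}/⌊n/2⌋!`,
where `δ^{n/2}` is the real power. -/
theorem hcoef_bounds (α : ENNReal) (δ : ℝ) (hδ : δ = (1 - expNegE α) / 2) (n : ℕ) :
    (1 - δ ≤ hcoef α n ∧ hcoef α n ≤ 1) ∧
    (Real.exp (-δ) - δ ^ ((n : ℝ) / 2) / ((n / 2).factorial : ℝ) ≤ hcoef α n ∧
      hcoef α n ≤ Real.exp (-δ) + δ ^ ((n : ℝ) / 2) / ((n / 2).factorial : ℝ)) := by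
  obtain ⟨hx0, hx1⟩ := expNegE_mem α
  have h0 : 0 ≤ δ := by linarith
  have h1 : δ ≤ 1 := by linarith
  rw [hcoef_eq, ← hδ]
  refine ⟨taylor_sum_bounds h0 h1 _, ?_⟩
  have hr := taylor_remainder h0 h1 (n / 2)
  have hpow : δ ^ (n / 2 + 1) ≤ δ ^ ((n : ℝ) / 2) := by
    rcases h0.eq_or_lt with rfl | hpos
    · rw [zero_pow (by omega)]
      exact Real.rpow_nonneg le_rfl _
    · rw [← Real.rpow_natCast]
      refine Real.rpow_le_rpow_of_exponent_ge hpos h1 ?_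
      have : n ≤ 2 * (n / 2 + 1) := by omega
      have : (n : ℝ) ≤ 2 * ((n / 2 + 1 : ℕ) : ℝ) := by exact_mod_cast this
      linarith
  have hle : δ ^ (n / 2 + 1) / ((n / 2).factorial : ℝ) ≤
      δ ^ ((n : ℝ) / 2) / ((n / 2).factorial : ℝ) := by gcongr
  have hb := abs_le.1 (hr.trans hle)
  constructor <;> linarith [hb.1, hb.2]

end
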